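/- Let F be a presheaf on 𝒱I with a minimal generating family ((W_i)_{i∈I}, q), and let (V,x) be a central element of F. Then x belongs to ⋂_{i∈I} F_i(V), where F_i is the image of Hom_{𝒱I}(−,W_i) under q, and (V,x) is a central element of each presheaf F_i. -/

import Mathlib

set_option maxHeartbeats 1000000

namespace Paper

/-- A finite-dimensional vector space over `𝔽_p = ZMod p`: an object of the
categories `𝒱^f` and `𝒱I`. -/
structure FDVec (p : ℕ) [Fact p.Prime] : Type 1 where
  carrier : Type
  [addCommGroup' : AddCommGroup carrier]
  [module' : Module (ZMod p) carrier]
  [finiteDimensional' : FiniteDimensional (ZMod p) carrier]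

attribute [instance] FDVec.addCommGroup' FDVec.module' FDVec.finiteDimensional'

instance (p : ℕ) [Fact p.Prime] : CoeSort (FDVec p) Type := ⟨FDVec.carrier⟩

abbrev FDVec.of (p : ℕ) [Fact p.Prime] (X : Type) [AddCommGroup X] [Module (ZMod p) X]
    [FiniteDimensional (ZMod p) X] : FDVec p := ⟨X⟩

variable {p : ℕ} [Fact p.Prime]

/-- The object of `𝒱I` determined by a subspace. -/
abbrev subFD {W : FDVec p} (U : Submodule (ZMod p) W) : FDVec p := FDVec.of p U

theorem comp_injective {A B C : Type} [AddCommGroup A] [Module (ZMod p) A]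
    [AddCommGroup B] [Module (ZMod p) B] [AddCommGroup C] [Module (ZMod p) C]
    (f : A →ₗ[ZMod p] B) (g : B →ₗ[ZMod p] C)
    (hf : Function.Injective f) (hg : Function.Injective g) :
    Function.Injective (g ∘ₗ f) := fun _ _ h => hf (hg h)

theorem linearMap_id_injective (V : Type) [AddCommGroup V] [Module (ZMod p) V] :
    Function.Injective (LinearMap.id : V →ₗ[ZMod p] V) := fun _ _ h => h

theorem equiv_toLinearMap_injective {A B : Type} [AddCommGroup A] [Module (ZMod p) A]
    [AddCommGroup B] [Module (ZMod p) B] (e : A ≃ₗ[ZMod p] B) :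
    Function.Injective (e.toLinearMap : A →ₗ[ZMod p] B) := e.injective

/-- A presheaf on the category `𝒱I` of finite-dimensional `𝔽_p`-vector spaces
and injective linear maps: a contravariant functor to `Set`. -/
structure VIPresheaf (p : ℕ) [Fact p.Prime] where
  obj : FDVec p → Type
  map : ∀ {V W : FDVec p} (f : V →ₗ[ZMod p] W), Function.Injective f → obj W → obj V
  map_id : ∀ (V : FDVec p) (h : Function.Injective (LinearMap.id : V →ₗ[ZMod p] V))
      (x : obj V), map LinearMap.id h x = x
  map_comp : ∀ {V W X : FDVec p} (f : V →ₗ[ZMod p] W) (hf : Function.Injective f)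
      (g : W →ₗ[ZMod p] X) (hg : Function.Injective g)
      (hgf : Function.Injective (g ∘ₗ f)) (x : obj X),
      map (g ∘ₗ f) hgf x = map f hf (map g hg x)

/-- A groupoid whose objects are the pairs `(U, i)` with `U` a subspace of `W i`,
and whose morphisms are linear isomorphisms between such subspaces. -/
structure SubGroupoid {ι : Type} (W : ι → FDVec p) where
  mor : ∀ (i j : ι) (U : Submodule (ZMod p) (W i)) (U' : Submodule (ZMod p) (W j)),
    Set (↥U ≃ₗ[ZMod p] ↥U')
  id_mem : ∀ i U, LinearEquiv.refl (ZMod p) ↥U ∈ mor i i U U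
  comp_mem : ∀ (i j k : ι) (U : Submodule (ZMod p) (W i)) (U' : Submodule (ZMod p) (W j))
      (U'' : Submodule (ZMod p) (W k)) (α : ↥U ≃ₗ[ZMod p] ↥U')
      (β : ↥U' ≃ₗ[ZMod p] ↥U''),
      α ∈ mor i j U U' → β ∈ mor j k U' U'' → (α.trans β) ∈ mor i k U U''
  inv_mem : ∀ (i j : ι) (U : Submodule (ZMod p) (W i)) (U' : Submodule (ZMod p) (W j))
      (α : ↥U ≃ₗ[ZMod p] ↥U'),
      α ∈ mor i j U U' → α.symm ∈ mor j i U' U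

section Restriction

variable {Wi Wj : FDVec p} {U : Submodule (ZMod p) Wi} {U' : Submodule (ZMod p) Wj}

/-- The restriction of `α : U ≃ U'` to a subspace `M ≤ U`, as a map to the ambient space. -/
def restrictMap (α : ↥U ≃ₗ[ZMod p] ↥U') {M : Submodule (ZMod p) Wi}
    (hMU : M ≤ U) : ↥M →ₗ[ZMod p] Wj :=
  U'.subtype ∘ₗ (α.toLinearMap) ∘ₗ (Submodule.inclusion hMU)

theorem restrictMap_injective (α : ↥U ≃ₗ[ZMod p] ↥U')
    {M : Submodule (ZMod p) Wi} (hMU : M ≤ U) :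
    Function.Injective (restrictMap α hMU) := by
  intro a b hab
  have h1 : α (Submodule.inclusion hMU a) = α (Submodule.inclusion hMU b) := Subtype.ext hab
  have h2 := α.injective h1
  have h3 := congrArg Subtype.val h2
  exact Subtype.ext h3

/-- The image `α(M)` of a subspace `M ≤ U` under `α : U ≃ U'`. -/
def restrictImg (α : ↥U ≃ₗ[ZMod p] ↥U') {M : Submodule (ZMod p) Wi}
    (hMU : M ≤ U) : Submodule (ZMod p) Wj :=
  LinearMap.range (restrictMap α hMU)

/-- The restriction-corestriction `α_M : M ≃ α(M)` of `α : U ≃ U'` to `M ≤ U`. -/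
noncomputable def restrictEquiv (α : ↥U ≃ₗ[ZMod p] ↥U')
    {M : Submodule (ZMod p) Wi} (hMU : M ≤ U) :
    ↥M ≃ₗ[ZMod p] ↥(restrictImg α hMU) :=
  LinearEquiv.ofInjective _ (restrictMap_injective α hMU)

end Restriction

/-- The restriction property of a groupoid on subspaces. -/
def SubGroupoid.HasRestriction {ι : Type} {W : ι → FDVec p} (G : SubGroupoid W) : Prop :=
  ∀ (i j : ι) (U : Submodule (ZMod p) (W i)) (U' : Submodule (ZMod p) (W j))
    (α : ↥U ≃ₗ[ZMod p] ↥U'), α ∈ G.mor i j U U' →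
    ∀ (M : Submodule (ZMod p) (W i)) (hMU : M ≤ U),
      restrictEquiv α hMU ∈ G.mor i j M (restrictImg α hMU)

/-- An element of `⊔_{i} Hom_{𝒱I}(V, W i)`. -/
def InjHom (V : FDVec p) {ι : Type} (W : ι → FDVec p) : Type :=
  Σ i : ι, {f : V →ₗ[ZMod p] W i // Function.Injective f}

/-- The relation `∼_𝒢` on `⊔_i Hom_{𝒱I}(V, W i)`. -/
def SubGroupoid.Rel {ι : Type} {W : ι → FDVec p} (G : SubGroupoid W) (V : FDVec p)
    (x y : InjHom V W) : Prop :=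
  ∃ α ∈ G.mor x.1 y.1 (LinearMap.range x.2.1) (LinearMap.range y.2.1),
    ∀ v : V, ((α (x.2.1.rangeRestrict v) : ↥(LinearMap.range y.2.1)) : W y.1) = y.2.1 v

/-- A generating family of a presheaf `F` on `𝒱I`: a natural surjection
`q : ⊔_i Hom_{𝒱I}(−, W i) → F`. -/
structure GenFamily {ι : Type} (W : ι → FDVec p) (F : VIPresheaf p) where
  q : ∀ (V : FDVec p) (i : ι) (f : V →ₗ[ZMod p] W i), Function.Injective f → F.obj V
  natural : ∀ (T V : FDVec p) (β : T →ₗ[ZMod p] V) (hβ : Function.Injective β)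
      (i : ι) (f : V →ₗ[ZMod p] W i) (hf : Function.Injective f)
      (hfβ : Function.Injective (f ∘ₗ β)),
      q T i (f ∘ₗ β) hfβ = F.map β hβ (q V i f hf)
  surjective : ∀ (V : FDVec p) (x : F.obj V), ∃ i f hf, q V i f hf = x

/-- `φ_i = q(id_{W i})`. -/
def GenFamily.phi {ι : Type} {W : ι → FDVec p} {F : VIPresheaf p} (Q : GenFamily W F)
    (i : ι) : F.obj (W i) :=
  Q.q (W i) i LinearMap.id (linearMap_id_injective _)

/-- The morphisms of the groupoid `𝒢_{(F,q)}`: isomorphisms `α : U ≃ U'` with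
`α^* ι_{U'}^* φ_j = ι_U^* φ_i`. -/
def GenFamily.mor {ι : Type} {W : ι → FDVec p} {F : VIPresheaf p} (Q : GenFamily W F)
    (i j : ι) (U : Submodule (ZMod p) (W i)) (U' : Submodule (ZMod p) (W j)) :
    Set (↥U ≃ₗ[ZMod p] ↥U') :=
  {α | F.map (V := subFD U) (W := subFD U') α.toLinearMap (equiv_toLinearMap_injective α)
        (F.map (V := subFD U') (W := W j) U'.subtype U'.injective_subtype (Q.phi j))
      = F.map (V := subFD U) (W := W i) U.subtype U.injective_subtype (Q.phi i)}

/-- The relation `∼_{𝒢_{(F,q)}}`. -/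
def GenFamily.GRel {ι : Type} {W : ι → FDVec p} {F : VIPresheaf p} (Q : GenFamily W F)
    (V : FDVec p) (x y : InjHom V W) : Prop :=
  ∃ α ∈ Q.mor x.1 y.1 (LinearMap.range x.2.1) (LinearMap.range y.2.1),
    ∀ v : V, ((α (x.2.1.rangeRestrict v) : ↥(LinearMap.range y.2.1)) : W y.1) = y.2.1 v

/-- `x ∈ F_i(V)`, where `F_i ⊆ F` is the image of `Hom_{𝒱I}(−, W i)` under `q`. -/
def GenFamily.memComponent {ι : Type} {W : ι → FDVec p} {F : VIPresheaf p}
    (Q : GenFamily W F) (i : ι) (V : FDVec p) (x : F.obj V) : Prop :=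
  ∃ f hf, Q.q V i f hf = x

/-- Minimality of a generating family: `F_i ⊄ F_j` for `i ≠ j`. -/
def GenFamily.Minimal {ι : Type} {W : ι → FDVec p} {F : VIPresheaf p}
    (Q : GenFamily W F) : Prop :=
  ∀ i j : ι, i ≠ j →
    ¬ (∀ (V : FDVec p) (x : F.obj V), Q.memComponent i V x → Q.memComponent j V x)

/-- A class in `𝐁(V, W)`, represented canonically by its "glue" subspace
`G = {(ν m, −ω m) : m ∈ M} ⊆ V × W`.  The two conditions express the injectivity
of `ν` and of `ω` respectively. -/
structure Corr (p : ℕ) [Fact p.Prime] (V W : FDVec p) where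
  carrier : Submodule (ZMod p) (↥V × ↥W)
  inj_left : ∀ m ∈ carrier, Prod.fst m = 0 → m = 0
  inj_right : ∀ m ∈ carrier, Prod.snd m = 0 → m = 0

/-- The pushout `V ⊕_{ν,ω} W` of a class of `𝐁(V,W)`. -/
abbrev Corr.po {V W : FDVec p} (c : Corr p V W) : FDVec p :=
  FDVec.of p ((↥V × ↥W) ⧸ c.carrier)

/-- The canonical injection `ι_V : V → V ⊕_{ν,ω} W`. -/
def Corr.inl {V W : FDVec p} (c : Corr p V W) : V →ₗ[ZMod p] c.po :=
  c.carrier.mkQ ∘ₗ LinearMap.inl (ZMod p) ↥V ↥W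

/-- The canonical injection `ι_W : W → V ⊕_{ν,ω} W`. -/
def Corr.inr {V W : FDVec p} (c : Corr p V W) : W →ₗ[ZMod p] c.po :=
  c.carrier.mkQ ∘ₗ LinearMap.inr (ZMod p) ↥V ↥W

theorem Corr.inl_injective {V W : FDVec p} (c : Corr p V W) :
    Function.Injective c.inl := by
  intro a b hab
  have h : (Submodule.Quotient.mk ((a, 0) : ↥V × ↥W) : (↥V × ↥W) ⧸ c.carrier)
      = Submodule.Quotient.mk (b, 0) := hab
  have hmem : ((a, 0) : ↥V × ↥W) - (b, 0) ∈ c.carrier := by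
    rwa [Submodule.Quotient.eq] at h
  have h2 := c.inj_right _ hmem (by simp)
  have h3 := congrArg Prod.fst h2
  simpa [sub_eq_zero] using h3

theorem Corr.inr_injective {V W : FDVec p} (c : Corr p V W) :
    Function.Injective c.inr := by
  intro a b hab
  have h : (Submodule.Quotient.mk ((0, a) : ↥V × ↥W) : (↥V × ↥W) ⧸ c.carrier)
      = Submodule.Quotient.mk (0, b) := hab
  have hmem : ((0, a) : ↥V × ↥W) - (0, b) ∈ c.carrier := by
    rwa [Submodule.Quotient.eq] at h
  have h2 := c.inj_left _ hmem (by simp)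
  have h3 := congrArg Prod.snd h2
  simpa [sub_eq_zero] using h3

/-- The fibre `σ_{(V,x)}F(W)` of `σ_V F(W) = ⊔_{𝐁(V,W)} F(V ⊕_{ν,ω} W)` over `x ∈ F(V)`. -/
def CentralFib (F : VIPresheaf p) (V : FDVec p) (x : F.obj V) (W : FDVec p) : Type :=
  Σ c : Corr p V W,
    {b : F.obj c.po // F.map (V := V) (W := c.po) c.inl c.inl_injective b = x}

/-- The map `ρ_{F,(V,x)} : σ_{(V,x)}F(W) → F(W)`, sending `b` to `ι_W^* b`. -/
def centralMap (F : VIPresheaf p) (V : FDVec p) (x : F.obj V) (W : FDVec p) :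
    CentralFib F V x W → F.obj W :=
  fun s => F.map (V := W) (W := Sigma.fst s |>.po) s.1.inr s.1.inr_injective s.2.1

/-- `(V, x)` is central for `F` if `ρ_{F,(V,x)}` is an isomorphism of presheaves. -/
def VIPresheaf.IsCentral (F : VIPresheaf p) (V : FDVec p) (x : F.obj V) : Prop :=
  ∀ W : FDVec p, Function.Bijective (centralMap F V x W)

/-- The class of `𝐁(V, U)` associated with a pair of injections `δ : V → W`, `ε : U → W`:
its glue subspace is `ker(δ + ε) ⊆ V × U`. -/
def kerCorr {V U W : FDVec p} (δ : V →ₗ[ZMod p] W) (ε : U →ₗ[ZMod p] W)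
    (hδ : Function.Injective δ) (hε : Function.Injective ε) : Corr p V U where
  carrier := LinearMap.ker (δ.coprod ε)
  inj_left := by
    intro m hm h1
    have hk : δ m.1 + ε m.2 = 0 := by simpa [LinearMap.mem_ker] using hm
    rw [h1] at hk
    simp only [map_zero, zero_add] at hk
    have h2 : m.2 = 0 := hε (by simpa using hk)
    exact Prod.ext h1 h2
  inj_right := by
    intro m hm h2
    have hk : δ m.1 + ε m.2 = 0 := by simpa [LinearMap.mem_ker] using hm
    rw [h2] at hk
    simp only [map_zero, add_zero] at hk
    have h1 : m.1 = 0 := hδ (by simpa using hk)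
    exact Prod.ext h1 h2

/-- The isomorphism `ε ↑ δ : V ⊕_{ν,μ} U ≃ δ(V) + ε(U)` of the first isomorphism theorem. -/
noncomputable def upArrow {V U W : FDVec p} (δ : V →ₗ[ZMod p] W) (ε : U →ₗ[ZMod p] W) :
    ((↥V × ↥U) ⧸ LinearMap.ker (δ.coprod ε)) ≃ₗ[ZMod p]
      ↥(LinearMap.range δ ⊔ LinearMap.range ε : Submodule (ZMod p) W) :=
  (δ.coprod ε).quotKerEquivRange ≪≫ₗ LinearEquiv.ofEq _ _ (LinearMap.range_coprod δ ε)

/-- The class `[T, id_T, α] ∈ 𝐁(V, T)` associated with an injection `α : T → V`. -/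
def idCorr {V T : FDVec p} (α : T →ₗ[ZMod p] V) (hα : Function.Injective α) :
    Corr p V T where
  carrier := LinearMap.range (α.prod (-(LinearMap.id : T →ₗ[ZMod p] T)))
  inj_left := by
    rintro m ⟨t, rfl⟩ h1
    simp only [LinearMap.prod_apply, Pi.prod, LinearMap.neg_apply, LinearMap.id_apply] at h1 ⊢
    have ht : t = 0 := hα (by simpa using h1)
    simp [ht]
  inj_right := by
    rintro m ⟨t, rfl⟩ h2
    simp only [LinearMap.prod_apply, Pi.prod, LinearMap.neg_apply, LinearMap.id_apply] at h2 ⊢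
    have ht : t = 0 := by simpa [neg_eq_zero] using h2
    simp [ht]

/-- The sub-presheaf `F_i ⊆ F`: the image of `Hom_{𝒱I}(−, W i)` under `q`. -/
def GenFamily.component {ι : Type} {W : ι → FDVec p} {F : VIPresheaf p}
    (Q : GenFamily W F) (i : ι) : VIPresheaf p where
  obj V := {x : F.obj V // Q.memComponent i V x}
  map {T V} β hβ y :=
    ⟨F.map β hβ y.1, by
      obtain ⟨f, hf, hqf⟩ := y.2
      refine ⟨f ∘ₗ β, comp_injective β f hβ hf, ?_⟩
      rw [Q.natural T V β hβ i f hf (comp_injective β f hβ hf), hqf]⟩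
  map_id := by
    intro V h x
    exact Subtype.ext (F.map_id V h x.1)
  map_comp := by
    intro V W' X f hf g hg hgf x
    exact Subtype.ext (F.map_comp f hf g hg hgf x.1)

/-- The injection `V ⊕_{ν,μ} U → W` induced by a pair of injections `δ : V → W`, `ε : U → W`. -/
def kerCorrDesc {V U W : FDVec p} (δ : V →ₗ[ZMod p] W) (ε : U →ₗ[ZMod p] W)
    (hδ : Function.Injective δ) (hε : Function.Injective ε) :
    (kerCorr δ ε hδ hε).po →ₗ[ZMod p] W :=
  (kerCorr δ ε hδ hε).carrier.liftQ (δ.coprod ε) le_rfl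

theorem kerCorrDesc_injective {V U W : FDVec p} (δ : V →ₗ[ZMod p] W) (ε : U →ₗ[ZMod p] W)
    (hδ : Function.Injective δ) (hε : Function.Injective ε) :
    Function.Injective (kerCorrDesc δ ε hδ hε) :=
  LinearMap.ker_eq_bot.mp (Submodule.ker_liftQ_eq_bot _ _ _ le_rfl)

theorem kerCorrDesc_comp_inl {V U W : FDVec p} (δ : V →ₗ[ZMod p] W) (ε : U →ₗ[ZMod p] W)
    (hδ : Function.Injective δ) (hε : Function.Injective ε) :
    kerCorrDesc δ ε hδ hε ∘ₗ (kerCorr δ ε hδ hε).inl = δ := by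
  ext v
  change δ v + ε 0 = δ v
  simp

theorem kerCorrDesc_comp_inr {V U W : FDVec p} (δ : V →ₗ[ZMod p] W) (ε : U →ₗ[ZMod p] W)
    (hδ : Function.Injective δ) (hε : Function.Injective ε) :
    kerCorrDesc δ ε hδ hε ∘ₗ (kerCorr δ ε hδ hε).inr = ε := by
  ext u
  change δ 0 + ε u = ε u
  simp

section Component

variable {ι : Type} {W : ι → FDVec p} {F : VIPresheaf p} (Q : GenFamily W F)

theorem GenFamily.map_q {T V : FDVec p} (β : T →ₗ[ZMod p] V) (hβ : Function.Injective β) {i : ι}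
    (f : V →ₗ[ZMod p] W i) (hf : Function.Injective f) (g : T →ₗ[ZMod p] W i)
    (hg : Function.Injective g) (h : f ∘ₗ β = g) :
    F.map β hβ (Q.q V i f hf) = Q.q T i g hg := by
  subst h
  exact (Q.natural T V β hβ i f hf hg).symm

theorem GenFamily.memComponent.map {i : ι} {T V : FDVec p} {x : F.obj V}
    (hx : Q.memComponent i V x) (β : T →ₗ[ZMod p] V) (hβ : Function.Injective β) :
    Q.memComponent i T (F.map β hβ x) :=
  ((Q.component i).map β hβ ⟨x, hx⟩).2

/-- If `φ_i ∈ F_j(W_i)`, then `F_i ⊆ F_j`. -/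
theorem GenFamily.memComponent_of_phi {i j : ι} (h : Q.memComponent j (W i) (Q.phi i))
    (V : FDVec p) (x : F.obj V) (hx : Q.memComponent i V x) : Q.memComponent j V x := by
  obtain ⟨f, hf, rfl⟩ := hx
  rw [← Q.map_q f hf LinearMap.id (linearMap_id_injective _) f hf (LinearMap.id_comp f)]
  exact h.map Q f hf

/-- A central element lies in every component of a minimal generating family. -/
theorem GenFamily.Minimal.memComponent_of_isCentral (hmin : Q.Minimal) {V : FDVec p} {x : F.obj V}
    (hx : F.IsCentral V x) (i : ι) : Q.memComponent i V x := by
  obtain ⟨⟨c, b, hb⟩, hφ⟩ := (hx (W i)).2 (Q.phi i)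
  obtain ⟨j, f, hf, hq⟩ := Q.surjective c.po b
  have hbj : Q.memComponent j c.po b := ⟨f, hf, hq⟩
  have hij : i = j := by
    by_contra hne
    refine hmin i j hne (Q.memComponent_of_phi ?_)
    rw [← hφ]
    exact hbj.map Q c.inr c.inr_injective
  subst hij
  rw [← hb]
  exact hbj.map Q c.inl c.inl_injective

/-- An element of `F_i(V)` that is central for `F` is central for `F_i`. -/
theorem VIPresheaf.IsCentral.component {V : FDVec p} {x : F.obj V} (hx : F.IsCentral V x) {i : ι}
    (h : Q.memComponent i V x) : (Q.component i).IsCentral V ⟨x, h⟩ := by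
  intro U
  constructor
  · rintro ⟨c, ⟨b, hbi⟩, hb⟩ ⟨c', ⟨b', hbi'⟩, hb'⟩ he
    have key := (hx U).1 (a₁ := ⟨c, b, congrArg Subtype.val hb⟩)
      (a₂ := ⟨c', b', congrArg Subtype.val hb'⟩) (congrArg Subtype.val he)
    obtain ⟨rfl, hbb⟩ := Sigma.mk.inj key
    obtain rfl : b = b' := congrArg Subtype.val (eq_of_heq hbb)
    rfl
  · rintro ⟨y, ε, hε, rfl⟩
    obtain ⟨δ, hδ, hδx⟩ := id h
    have hg := kerCorrDesc_injective δ ε hδ hε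
    refine ⟨⟨kerCorr δ ε hδ hε, ⟨Q.q _ i (kerCorrDesc δ ε hδ hε) hg, _, hg, rfl⟩, ?_⟩, ?_⟩
    · exact Subtype.ext
        ((Q.map_q _ _ _ _ _ _ (kerCorrDesc_comp_inl δ ε hδ hε)).trans hδx)
    · exact Subtype.ext (Q.map_q _ _ _ _ _ _ (kerCorrDesc_comp_inr δ ε hδ hε))

end Component

/-- **Statement 13.** Let `F` have a minimal generating family `((W_i), q)` and let `(V,x)`
be a central element of `F`.  Then `x ∈ ⋂_i F_i(V)` and `(V,x)` is central for each
sub-presheaf `F_i`. -/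
theorem statement_13 {p : ℕ} [Fact p.Prime] {ι : Type} (W : ι → FDVec p)
    (F : VIPresheaf p) (Q : GenFamily W F) (hmin : Q.Minimal)
    (V : FDVec p) (x : F.obj V) (hx : F.IsCentral V x) (i : ι) :
    ∃ h : Q.memComponent i V x, (Q.component i).IsCentral V ⟨x, h⟩ := by
  have h := hmin.memComponent_of_isCentral Q hx i
  exact ⟨h, hx.component Q h⟩

end Paper
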